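/- Let X be an n-dimensional compact Kähler manifold and let γ₁, γ₂ be two Gauduchon (resp. movable, balanced) classes. Then 𝔐(γ₁ + γ₂)^{(n-1)/n} ≥ 𝔐(γ₁)^{(n-1)/n} + 𝔐(γ₂)^{(n-1)/n}. -/

import Mathlib

/-!
Write `p = n/(n-1)`, with inverse exponent `q = (n-1)/n`. Since `t ↦ t ^ p` is increasing on
`[0, ∞)`, `𝔐(γ) ^ q` is a lower bound of `⟨β, γ⟩` over the classes `β ∈ E₁`, and it is the greatest
nonnegative one when `E₁` is nonempty. By linearity of the pairing, `𝔐(γ₁) ^ q + 𝔐(γ₂) ^ q` is a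
lower bound of `⟨β, γ₁ + γ₂⟩`, hence at most `𝔐(γ₁ + γ₂) ^ q`.
-/

/-!
Setting: on an `n`-dimensional compact Kähler manifold `X`, `H11` plays the role of
`H^{1,1}_{BC}(X,ℝ)` and `W` plays the role of the space containing the Gauduchon
(resp. movable, balanced) cone `C`; `pair` is the natural duality pairing, `vol` the
volume of pseudo-effective `(1,1)`-classes, and `E` the pseudo-effective cone.
Classes in `C` pair non-negatively with pseudo-effective classes (`hdual`).
-/

/-- The invariant `𝔐(γ) = inf_{β ∈ E₁} ⟨β,γ⟩^{n/(n-1)}`, where `E₁` is the set of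
pseudo-effective `(1,1)`-classes of volume one. -/
noncomputable def MInv {H11 W : Type*} [AddCommGroup H11] [Module ℝ H11]
    [AddCommGroup W] [Module ℝ W]
    (n : ℕ) (pair : H11 →ₗ[ℝ] W →ₗ[ℝ] ℝ) (vol : H11 → ℝ)
    (E : Set H11) (γ : W) : ℝ :=
  sInf {t : ℝ | ∃ β ∈ E, vol β = 1 ∧ t = pair β γ ^ ((n : ℝ) / ((n : ℝ) - 1))}

theorem MInv_nonneg {H11 W : Type*} [AddCommGroup H11] [Module ℝ H11]
    [AddCommGroup W] [Module ℝ W]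
    (n : ℕ) (pair : H11 →ₗ[ℝ] W →ₗ[ℝ] ℝ) (vol : H11 → ℝ) (E : Set H11) (γ : W)
    (hγ : ∀ β ∈ E, 0 ≤ pair β γ) : 0 ≤ MInv n pair vol E γ := by
  apply Real.sInf_nonneg
  rintro t ⟨β, hβ, -, rfl⟩
  exact Real.rpow_nonneg (hγ β hβ) _

theorem MInv_rpow_le_pair {H11 W : Type*} [AddCommGroup H11] [Module ℝ H11]
    [AddCommGroup W] [Module ℝ W]
    (n : ℕ) (hn : 2 ≤ n) (pair : H11 →ₗ[ℝ] W →ₗ[ℝ] ℝ) (vol : H11 → ℝ) (E : Set H11) (γ : W)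
    (hγ : ∀ β ∈ E, 0 ≤ pair β γ) (β : H11) (hβ : β ∈ E) (hv : vol β = 1) :
    MInv n pair vol E γ ^ (((n : ℝ) - 1) / n) ≤ pair β γ := by
  have hn' : (2 : ℝ) ≤ n := by exact_mod_cast hn
  have hp : 0 < (n : ℝ) / ((n : ℝ) - 1) := div_pos (by linarith) (by linarith)
  rw [← inv_div, Real.rpow_inv_le_iff_of_pos (MInv_nonneg n pair vol E γ hγ) (hγ β hβ) hp]
  refine csInf_le ⟨0, ?_⟩ ⟨β, hβ, hv, rfl⟩
  rintro t ⟨β', hβ', -, rfl⟩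
  exact Real.rpow_nonneg (hγ β' hβ') _

/-- For Gauduchon (resp. movable, balanced) classes `γ₁, γ₂` on an
`n`-dimensional compact Kähler manifold,
`𝔐(γ₁ + γ₂)^{(n-1)/n} ≥ 𝔐(γ₁)^{(n-1)/n} + 𝔐(γ₂)^{(n-1)/n}`. -/
theorem MInv_superadditive
    (n : ℕ) (hn : 2 ≤ n)
    (H11 W : Type*) [AddCommGroup H11] [Module ℝ H11]
    [AddCommGroup W] [Module ℝ W]
    (pair : H11 →ₗ[ℝ] W →ₗ[ℝ] ℝ)
    (vol : H11 → ℝ)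
    (E : Set H11)      -- the pseudo-effective cone of (1,1)-classes
    (C : Set W)        -- the Gauduchon (resp. movable, balanced) cone
    (hCadd : ∀ γ₁ ∈ C, ∀ γ₂ ∈ C, γ₁ + γ₂ ∈ C)
    (hCsmul : ∀ c : ℝ, 0 < c → ∀ γ ∈ C, c • γ ∈ C)
    (hvol : ∀ β, 0 ≤ vol β)
    (hdual : ∀ β ∈ E, ∀ γ ∈ C, 0 ≤ pair β γ)
    (γ₁ γ₂ : W) (h₁ : γ₁ ∈ C) (h₂ : γ₂ ∈ C) :
    MInv n pair vol E γ₁ ^ (((n : ℝ) - 1) / n) + MInv n pair vol E γ₂ ^ (((n : ℝ) - 1) / n)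
      ≤ MInv n pair vol E (γ₁ + γ₂) ^ (((n : ℝ) - 1) / n) := by
  have hn' : (2 : ℝ) ≤ n := by exact_mod_cast hn
  have hp : 0 < (n : ℝ) / ((n : ℝ) - 1) := div_pos (by linarith) (by linarith)
  have hd₁ : ∀ β ∈ E, 0 ≤ pair β γ₁ := fun β hβ => hdual β hβ γ₁ h₁
  have hd₂ : ∀ β ∈ E, 0 ≤ pair β γ₂ := fun β hβ => hdual β hβ γ₂ h₂
  have hd : ∀ β ∈ E, 0 ≤ pair β (γ₁ + γ₂) := fun β hβ => hdual β hβ _ (hCadd _ h₁ _ h₂)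
  by_cases hE : ∃ β ∈ E, vol β = 1
  · have ha := add_nonneg
      (Real.rpow_nonneg (MInv_nonneg n pair vol E γ₁ hd₁) (((n : ℝ) - 1) / n))
      (Real.rpow_nonneg (MInv_nonneg n pair vol E γ₂ hd₂) (((n : ℝ) - 1) / n))
    have key : (MInv n pair vol E γ₁ ^ (((n : ℝ) - 1) / n)
        + MInv n pair vol E γ₂ ^ (((n : ℝ) - 1) / n)) ^ ((n : ℝ) / ((n : ℝ) - 1))
        ≤ MInv n pair vol E (γ₁ + γ₂) := by
      obtain ⟨β₀, hβ₀, hv₀⟩ := hE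
      refine le_csInf ⟨_, β₀, hβ₀, hv₀, rfl⟩ ?_
      rintro t ⟨β, hβ, hv, rfl⟩
      refine Real.rpow_le_rpow ha ?_ hp.le
      rw [map_add]
      exact add_le_add (MInv_rpow_le_pair n hn pair vol E γ₁ hd₁ β hβ hv)
        (MInv_rpow_le_pair n hn pair vol E γ₂ hd₂ β hβ hv)
    rw [← inv_div (n : ℝ) ((n : ℝ) - 1)] at ha key ⊢
    exact (Real.le_rpow_inv_iff_of_pos ha (MInv_nonneg n pair vol E _ hd) hp).2 key
  -- Without classes of volume one, `sInf ∅ = 0` makes all three invariants vanish.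
  · have h0 : ∀ γ, MInv n pair vol E γ = 0 := by
      intro γ
      unfold MInv
      convert Real.sInf_empty
      ext t
      simp only [Set.mem_ofPred_eq, Set.mem_empty_iff_false, iff_false]
      rintro ⟨β, hβ, hv, -⟩
      exact hE ⟨β, hβ, hv⟩
    have hq : ((n : ℝ) - 1) / n ≠ 0 := (div_pos (by linarith) (by linarith)).ne'
    simp [h0, Real.zero_rpow hq]
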